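/- For every n ≥ 2 and all words u, v ∈ A*: if u and v agree on rankers from uR^X_{2,2n} (i.e., the same rankers of uR^X_{2,2n} are defined on u and v), then u ⊳_{2,n} v, that is, u and v agree on condensed rankers from uR^X_{2,n}. Dually, if u and v agree on rankers from uR^Y_{2,2n}, then u ⊲_{2,n} v. -/

import Mathlib

namespace RankerPaper

variable {A : Type*} [DecidableEq A]

/-- Letters of rankers: `X a` ("next `a` to the right") and `Y a` ("next `a` to the left"). -/
inductive RLetter (A : Type*) where
  | X : A → RLetter A
  | Y : A → RLetter A
  deriving DecidableEq

/-- Least `a`-position of `u` strictly greater than `q` (positions are 1-indexed). -/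
def nextOcc (u : List A) (a : A) (q : ℕ) : Option ℕ :=
  ((List.range (u.length + 2)).filter (fun i => decide (q < i ∧ u[i-1]? = some a))).head?

/-- Greatest `a`-position of `u` strictly less than `q` (positions are 1-indexed). -/
def prevOcc (u : List A) (a : A) (q : ℕ) : Option ℕ :=
  ((List.range (u.length + 2)).filter
    (fun i => decide (1 ≤ i ∧ i < q ∧ u[i-1]? = some a))).getLast?

/-- One evaluation step of a ranker letter from position `q`. -/
def stepR (u : List A) : RLetter A → ℕ → Option ℕ
  | .X a, q => nextOcc u a q
  | .Y a, q => prevOcc u a q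

/-- Evaluation of a ranker from position `q`, processing letters left to right. -/
def evalFrom (u : List A) : List (RLetter A) → ℕ → Option ℕ
  | [], q => some q
  | z :: r, q => (stepR u z q).bind (evalFrom u r)

/-- Starting position: `0` for an `X`-letter, `|u|+1` for a `Y`-letter. -/
def startPos (u : List A) : RLetter A → ℕ
  | .X _ => 0
  | .Y _ => u.length + 1

/-- The position `r(u)` defined by the ranker `r` on `u` (`none` if undefined;
empty rankers are considered undefined, rankers being nonempty words). -/
def evalR (u : List A) (r : List (RLetter A)) : Option ℕ :=
  match r with
  | [] => none
  | z :: t => evalFrom u (z :: t) (startPos u z)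

/-- `r` is defined on `u`. -/
def Defined (u : List A) (r : List (RLetter A)) : Prop := (evalR u r).isSome

/-- The position `r(u)` (defaulting to `0` when undefined). -/
def pos (u : List A) (r : List (RLetter A)) : ℕ := (evalR u r).getD 0

/-- Do two ranker letters have the same direction? -/
def sameDir : RLetter A → RLetter A → Bool
  | .X _, .X _ => true
  | .Y _, .Y _ => true
  | _, _ => false

/-- Number of (alternating) blocks of a ranker. -/
def numBlocks : List (RLetter A) → ℕ
  | [] => 0
  | [_] => 1
  | z :: w :: t => (if sameDir z w then 0 else 1) + numBlocks (w :: t)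

def startsX (r : List (RLetter A)) : Prop := ∃ a t, r = RLetter.X a :: t
def startsY (r : List (RLetter A)) : Prop := ∃ a t, r = RLetter.Y a :: t
def endsX (r : List (RLetter A)) : Prop := ∃ a, r.getLast? = some (RLetter.X a)
def endsY (r : List (RLetter A)) : Prop := ∃ a, r.getLast? = some (RLetter.Y a)

/-- `R^X_{m,n}`: rankers with exactly `m` blocks, depth `n`, starting with an `X`-block. -/
def RX (m n : ℕ) (r : List (RLetter A)) : Prop :=
  numBlocks r = m ∧ r.length = n ∧ startsX r

/-- `R^Y_{m,n}`: rankers with exactly `m` blocks, depth `n`, starting with a `Y`-block. -/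
def RY (m n : ℕ) (r : List (RLetter A)) : Prop :=
  numBlocks r = m ∧ r.length = n ∧ startsY r

/-- `uR^X_{m,n}`. -/
def uRX (m n : ℕ) (r : List (RLetter A)) : Prop :=
  (∃ m' n', m' ≤ m ∧ n' ≤ n ∧ RX m' n' r) ∨ (∃ m' n', m' < m ∧ n' < n ∧ RY m' n' r)

/-- `uR^Y_{m,n}`. -/
def uRY (m n : ℕ) (r : List (RLetter A)) : Prop :=
  (∃ m' n', m' ≤ m ∧ n' ≤ n ∧ RY m' n' r) ∨ (∃ m' n', m' < m ∧ n' < n ∧ RX m' n' r)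

/-- `uR_{m,n} = uR^X_{m,n} ∪ uR^Y_{m,n}`. -/
def uR (m n : ℕ) (r : List (RLetter A)) : Prop := uRX m n r ∨ uRY m n r

/-- `uR^X_m = ∪_{n ≥ m} uR^X_{m,n}`. -/
def uRXm (m : ℕ) (r : List (RLetter A)) : Prop := ∃ n, m ≤ n ∧ uRX m n r

/-- `uR^Y_m = ∪_{n ≥ m} uR^Y_{m,n}`. -/
def uRYm (m : ℕ) (r : List (RLetter A)) : Prop := ∃ n, m ≤ n ∧ uRY m n r

/-- `r = Z₁ ⋯ Z_n` is condensed on `u`: it is defined on `u` and there is a chain of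
open intervals `(0;|u|+1) = (i₀;j₀) ⊃ (i₁;j₁) ⊃ ⋯ ⊃ (i_{n-1};j_{n-1}) ∋ r(u)`
updated according to the pairs `Z_ℓ Z_{ℓ+1}`. -/
def Condensed (u : List A) (r : List (RLetter A)) : Prop :=
  ∃ (p : ℕ) (i j : ℕ → ℕ),
    evalR u r = some p ∧
    i 0 = 0 ∧ j 0 = u.length + 1 ∧
    (∀ ℓ a b, 1 ≤ ℓ → r[ℓ-1]? = some (RLetter.X a) → r[ℓ]? = some (RLetter.X b) →
        nextOcc u a (i (ℓ-1)) = some (i ℓ) ∧ j ℓ = j (ℓ-1)) ∧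
    (∀ ℓ a b, 1 ≤ ℓ → r[ℓ-1]? = some (RLetter.Y a) → r[ℓ]? = some (RLetter.Y b) →
        i ℓ = i (ℓ-1) ∧ prevOcc u a (j (ℓ-1)) = some (j ℓ)) ∧
    (∀ ℓ a b, 1 ≤ ℓ → r[ℓ-1]? = some (RLetter.X a) → r[ℓ]? = some (RLetter.Y b) →
        i ℓ = i (ℓ-1) ∧ nextOcc u a (i (ℓ-1)) = some (j ℓ)) ∧
    (∀ ℓ a b, 1 ≤ ℓ → r[ℓ-1]? = some (RLetter.Y a) → r[ℓ]? = some (RLetter.X b) →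
        prevOcc u a (j (ℓ-1)) = some (i ℓ) ∧ j ℓ = j (ℓ-1)) ∧
    (∀ ℓ, 1 ≤ ℓ → ℓ < r.length →
        i (ℓ-1) ≤ i ℓ ∧ j ℓ ≤ j (ℓ-1) ∧ (i (ℓ-1) < i ℓ ∨ j ℓ < j (ℓ-1))) ∧
    i (r.length - 1) < p ∧ p < j (r.length - 1)

/-- `u` and `v` agree on rankers from the set `R`. -/
def AgreeDef (R : List (RLetter A) → Prop) (u v : List A) : Prop :=
  ∀ r, R r → (Defined u r ↔ Defined v r)

/-- `u` and `v` agree on condensed rankers from the set `R`. -/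
def AgreeCond (R : List (RLetter A) → Prop) (u v : List A) : Prop :=
  ∀ r, R r → (Condensed u r ↔ Condensed v r)

/-- `u ⊳_{m,n} v`. -/
def trir (m n : ℕ) (u v : List A) : Prop := AgreeCond (uRX m n) u v

/-- `u ⊲_{m,n} v`. -/
def tril (m n : ℕ) (u v : List A) : Prop := AgreeCond (uRY m n) u v

/-- The alphabet (set of letters) of a word. -/
def alph (u : List A) : Finset A := u.toFinset

/-- Condition (WI 1). -/
def WI1 (m n : ℕ) (u v : List A) : Prop := AgreeDef (uR m n) u v

/-- Condition (WI 2). -/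
def WI2 (m n : ℕ) (u v : List A) : Prop :=
  ∀ r r', uR m n r → uR (m-1) (n-1) r' →
    Defined u r → Defined v r → Defined u r' → Defined v r' →
    compare (pos u r) (pos u r') = compare (pos v r) (pos v r')

/-- Condition (WI 3). -/
def WI3 (m n : ℕ) (u v : List A) : Prop :=
  ∀ r r', uR m n r → uR m (n-1) r' →
    ((endsX r ∧ endsY r') ∨ (endsY r ∧ endsX r')) →
    Defined u r → Defined v r → Defined u r' → Defined v r' →
    compare (pos u r) (pos u r') = compare (pos v r) (pos v r')

/-- Condition (WI 1c). -/
def WI1c (m n : ℕ) (u v : List A) : Prop := AgreeCond (uR m n) u v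

/-- Condition (WI 2c). -/
def WI2c (m n : ℕ) (u v : List A) : Prop :=
  ∀ r r', uR m n r → uR (m-1) (n-1) r' →
    Condensed u r → Condensed v r → Condensed u r' → Condensed v r' →
    compare (pos u r) (pos u r') = compare (pos v r) (pos v r')

/-- Condition (WI 3c). -/
def WI3c (m n : ℕ) (u v : List A) : Prop :=
  ∀ r r', uR m n r → uR m (n-1) r' →
    ((endsX r ∧ endsY r') ∨ (endsY r ∧ endsX r')) →
    Condensed u r → Condensed v r → Condensed u r' → Condensed v r' →
    compare (pos u r) (pos u r') = compare (pos v r) (pos v r')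



lemma nextOcc_some {u : List A} {a : A} {q p : ℕ} (h : nextOcc u a q = some p) :
    q < p ∧ p ≤ u.length ∧ u[p-1]? = some a ∧ ∀ i, q < i → u[i-1]? = some a → p ≤ i := by
  unfold nextOcc at h
  rw [List.head?_filter, List.find?_range_eq_some] at h
  obtain ⟨h1, h2, h3⟩ := h
  simp only [decide_eq_true_eq] at h1
  refine ⟨h1.1, ?_, h1.2, ?_⟩
  · obtain ⟨h4, _⟩ := List.getElem?_eq_some_iff.1 h1.2
    omega
  · intro i hi hu
    by_contra hc
    have := h3 i (by omega)
    simp [hi, hu] at this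

lemma nextOcc_exists {u : List A} {a : A} {q i : ℕ} (hi : q < i) (hu : u[i-1]? = some a) :
    ∃ p, nextOcc u a q = some p := by
  unfold nextOcc
  obtain ⟨h4, _⟩ := List.getElem?_eq_some_iff.1 hu
  suffices hne : (List.range (u.length + 2)).filter
      (fun i => decide (q < i ∧ u[i-1]? = some a)) ≠ [] from ⟨_, List.head?_eq_some_head hne⟩
  apply List.ne_nil_of_mem (a := i)
  simp [hi, hu]
  omega

lemma prevOcc_some {u : List A} {a : A} {q p : ℕ} (h : prevOcc u a q = some p) :
    1 ≤ p ∧ p < q ∧ p ≤ u.length ∧ u[p-1]? = some a ∧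
      ∀ i, 1 ≤ i → i < q → u[i-1]? = some a → i ≤ p := by
  unfold prevOcc at h
  have hm := List.mem_of_getLast? h
  simp only [List.mem_filter, List.mem_range, decide_eq_true_eq] at hm
  obtain ⟨_, h1, h2, h3⟩ := hm
  obtain ⟨h4, _⟩ := List.getElem?_eq_some_iff.1 h3
  refine ⟨h1, h2, by omega, h3, ?_⟩
  intro i hi hq hu
  obtain ⟨h5, _⟩ := List.getElem?_eq_some_iff.1 hu
  have hs : ((List.range (u.length + 2)).filter
    (fun i => decide (1 ≤ i ∧ i < q ∧ u[i-1]? = some a))).Pairwise (· < ·) :=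
    List.Pairwise.filter _ List.pairwise_lt_range
  obtain ⟨l, hl⟩ := List.getLast?_eq_some_iff.1 h
  have hmem : i ∈ ((List.range (u.length + 2)).filter
    (fun i => decide (1 ≤ i ∧ i < q ∧ u[i-1]? = some a))) := by
    simp [hi, hq, hu]
    omega
  rw [hl] at hs hmem
  rw [List.pairwise_append] at hs
  simp only [List.mem_append, List.mem_singleton] at hmem
  rcases hmem with hmem | hmem
  · exact (hs.2.2 i hmem p (by simp)).le
  · exact hmem.le

lemma prevOcc_exists {u : List A} {a : A} {q i : ℕ} (h1 : 1 ≤ i) (hi : i < q)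
    (hu : u[i-1]? = some a) : ∃ p, prevOcc u a q = some p := by
  unfold prevOcc
  rw [← Option.isSome_iff_exists, List.getLast?_isSome]
  obtain ⟨h4, _⟩ := List.getElem?_eq_some_iff.1 hu
  apply List.ne_nil_of_mem (a := i)
  simp [h1, hi, hu]
  omega

lemma evalFrom_append (u : List A) (r s : List (RLetter A)) (q : ℕ) :
    evalFrom u (r ++ s) q = (evalFrom u r q).bind (evalFrom u s) := by
  induction r generalizing q with
  | nil => rfl
  | cons z t ih =>
    simp only [List.cons_append, evalFrom]
    cases stepR u z q with
    | none => rfl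
    | some p => simp [ih]

lemma one_le_numBlocks (z : RLetter A) (t : List (RLetter A)) : 1 ≤ numBlocks (z :: t) := by
  induction t generalizing z with
  | nil => simp [numBlocks]
  | cons w t ih => simp only [numBlocks]; have := ih w; omega


lemma keyX (u : List A) (as : List A) : ∀ (q p : ℕ), evalFrom u (as.map RLetter.X) 0 = some q →
    1 ≤ p → ((∃ w, evalFrom u (as.reverse.map RLetter.Y) p = some w) ↔ q < p) := by
  induction as using List.reverseRecOn with
  | nil => intro q p h hp; simp [evalFrom] at h ⊢; omega
  | append_singleton as a ih =>
    intro q p h hp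
    rw [List.map_append, evalFrom_append, Option.bind_eq_some_iff] at h
    obtain ⟨q1, h1, h2⟩ := h
    simp only [List.map_cons, List.map_nil, evalFrom, stepR, Option.bind_eq_some_iff,
      Option.some.injEq, exists_eq_right] at h2
    simp only [List.reverse_append, List.reverse_cons, List.reverse_nil, List.nil_append,
      List.cons_append, List.map_cons, evalFrom, stepR, Option.bind_eq_some_iff]
    obtain ⟨g1, g2, g3, g4⟩ := nextOcc_some h2
    constructor
    · rintro ⟨w, p1, hp1, hw⟩
      obtain ⟨k1, k2, k3, k4, k5⟩ := prevOcc_some hp1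
      have := (ih q1 p1 h1 k1).1 ⟨w, hw⟩
      have := g4 p1 this k4
      omega
    · intro hlt
      obtain ⟨p1, hp1⟩ := prevOcc_exists (by omega) hlt g3
      obtain ⟨k1, k2, k3, k4, k5⟩ := prevOcc_some hp1
      have := k5 q (by omega) hlt g3
      obtain ⟨w, hw⟩ := (ih q1 p1 h1 k1).2 (by omega)
      exact ⟨w, p1, hp1, hw⟩

lemma keyY (u : List A) (as : List A) : ∀ (q p : ℕ),
    evalFrom u (as.map RLetter.Y) (u.length + 1) = some q →
    p ≤ u.length → ((∃ w, evalFrom u (as.reverse.map RLetter.X) p = some w) ↔ p < q) := by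
  induction as using List.reverseRecOn with
  | nil => intro q p h hp; simp [evalFrom] at h ⊢; omega
  | append_singleton as a ih =>
    intro q p h hp
    rw [List.map_append, evalFrom_append, Option.bind_eq_some_iff] at h
    obtain ⟨q1, h1, h2⟩ := h
    simp only [List.map_cons, List.map_nil, evalFrom, stepR, Option.bind_eq_some_iff,
      Option.some.injEq, exists_eq_right] at h2
    simp only [List.reverse_append, List.reverse_cons, List.reverse_nil, List.nil_append,
      List.cons_append, List.map_cons, evalFrom, stepR, Option.bind_eq_some_iff]
    obtain ⟨g0, g1, g2, g3, g4⟩ := prevOcc_some h2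
    constructor
    · rintro ⟨w, p1, hp1, hw⟩
      obtain ⟨k2, k3, k4, k5⟩ := nextOcc_some hp1
      have := (ih q1 p1 h1 k3).1 ⟨w, hw⟩
      have := g4 p1 (by omega) this k4
      omega
    · intro hlt
      obtain ⟨p1, hp1⟩ := nextOcc_exists hlt g3
      obtain ⟨k2, k3, k4, k5⟩ := nextOcc_some hp1
      have := k5 q hlt g3
      obtain ⟨w, hw⟩ := (ih q1 p1 h1 k3).2 (by omega)
      exact ⟨w, p1, hp1, hw⟩

lemma evalR_X (u : List A) (as : List A) (a : A) (bs : List (RLetter A)) :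
    evalR u ((as ++ [a]).map RLetter.X ++ bs) =
      evalFrom u ((as ++ [a]).map RLetter.X ++ bs) 0 := by
  cases as <;> rfl

lemma evalFrom_split_X (u : List A) (as : List A) (a : A) (bs : List (RLetter A)) (p : ℕ) :
    evalFrom u ((as ++ [a]).map RLetter.X ++ bs) 0 = some p ↔
    ∃ q q', evalFrom u (as.map RLetter.X) 0 = some q ∧ nextOcc u a q = some q' ∧
      evalFrom u bs q' = some p := by
  simp only [evalFrom_append, List.map_append, List.map_cons, List.map_nil, evalFrom, stepR,
    Option.bind_eq_some_iff, Option.some.injEq]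
  constructor
  · rintro ⟨x, ⟨y, h1, z, h2, rfl⟩, h3⟩
    exact ⟨y, z, h1, h2, h3⟩
  · rintro ⟨y, z, h1, h2, h3⟩
    exact ⟨z, ⟨y, h1, z, h2, rfl⟩, h3⟩

lemma get_left_X (as : List A) (a : A) (bs : List (RLetter A)) (l : ℕ) (h : l < as.length) :
    ((as ++ [a]).map RLetter.X ++ bs)[l]? = some (RLetter.X as[l]) := by
  rw [List.getElem?_append_left (by simp; omega)]
  rw [List.getElem?_map, List.getElem?_append_left h]
  simp [h]

lemma get_mid_X (as : List A) (a : A) (bs : List (RLetter A)) (l : ℕ) (h : l = as.length) :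
    ((as ++ [a]).map RLetter.X ++ bs)[l]? = some (RLetter.X a) := by
  subst h
  rw [List.getElem?_append_left (by simp)]
  simp

lemma get_right_X (as : List A) (a : A) (bs : List A) (l : ℕ) (h : as.length < l) :
    ((as ++ [a]).map RLetter.X ++ bs.map RLetter.Y)[l]? =
      (bs[l - as.length - 1]?).map RLetter.Y := by
  rw [List.getElem?_append_right (by simp; omega)]
  simp [Nat.sub_sub]

lemma takes_X (u : List A) (z : A → RLetter A) (as : List A) (s q : ℕ)
    (h : evalFrom u (as.map z) s = some q) (l : ℕ) (hl : l < as.length) :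
    ∃ x y, evalFrom u ((as.take l).map z) s = some x ∧
      evalFrom u ((as.take (l+1)).map z) s = some y ∧ stepR u (z as[l]) x = some y := by
  rw [← List.take_append_drop (l+1) as, List.map_append, evalFrom_append,
    Option.bind_eq_some_iff] at h
  obtain ⟨y, h1, h2⟩ := h
  have h3 := h1
  rw [List.take_succ_eq_append_getElem hl, List.map_append, evalFrom_append,
    Option.bind_eq_some_iff] at h3
  obtain ⟨x, h4, h5⟩ := h3
  refine ⟨x, y, h4, h1, ?_⟩
  simpa [evalFrom] using h5

lemma cond_X (u : List A) (as : List A) (a : A) (bs : List A) :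
    Condensed u ((as ++ [a]).map RLetter.X ++ bs.map RLetter.Y) ↔
    ∃ q q' p, evalFrom u (as.map RLetter.X) 0 = some q ∧ nextOcc u a q = some q' ∧
      evalFrom u (bs.map RLetter.Y) q' = some p ∧ q < p := by
  constructor
  · rintro ⟨p, i, j, he, hi0, -, hXX, hYY, hXY, hYX, hN, hp, -⟩
    rw [evalR_X, evalFrom_split_X] at he
    obtain ⟨q, q', h1, h2, h3⟩ := he
    refine ⟨q, q', p, h1, h2, h3, ?_⟩
    have hA : ∀ l, l ≤ as.length →
        evalFrom u ((as.take l).map RLetter.X) 0 = some (i l) := by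
      intro l
      induction l with
      | zero => intro _; simp [evalFrom, hi0]
      | succ l ih =>
        intro hl
        have g1 := get_left_X as a (bs.map RLetter.Y) l hl
        have g2 : ∃ b, ((as ++ [a]).map RLetter.X ++ bs.map RLetter.Y)[l+1]?
            = some (RLetter.X b) := by
          rcases Nat.lt_or_ge (l+1) as.length with h | h
          · exact ⟨_, get_left_X as a _ (l+1) h⟩
          · exact ⟨_, get_mid_X as a _ (l+1) (by omega)⟩
        obtain ⟨b, g2⟩ := g2
        have h5 := (hXX (l+1) _ b (by omega) g1 g2).1
        rw [List.take_succ_eq_append_getElem hl, List.map_append, evalFrom_append,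
          ih (by omega)]
        simpa [evalFrom, stepR] using h5
    have hB : ∀ l, l ≤ bs.length → i (as.length + l) = i as.length := by
      intro l
      induction l with
      | zero => intro _; rfl
      | succ l ih =>
        intro hl
        have g2 : ((as ++ [a]).map RLetter.X ++ bs.map RLetter.Y)[as.length + l + 1]?
            = some (RLetter.Y bs[l]) := by
          rw [get_right_X _ _ _ _ (by omega)]
          have : as.length + l + 1 - as.length - 1 = l := by omega
          rw [this]
          simp [show l < bs.length from hl]
        rw [← ih (by omega)]
        rcases Nat.eq_zero_or_pos l with h0 | h0
        · exact (hXY (as.length + l + 1) a _ (by omega) (get_mid_X _ _ _ _ (by omega)) g2).1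
        · have g1 : ((as ++ [a]).map RLetter.X ++ bs.map RLetter.Y)[as.length + l]?
            = some (RLetter.Y bs[l-1]) := by
            rw [get_right_X _ _ _ _ (by omega)]
            have : as.length + l - as.length - 1 = l - 1 := by omega
            rw [this]
            simp [show l - 1 < bs.length by omega]
          exact (hYY (as.length + l + 1) _ _ (by omega) g1 g2).1
    have e1 := hA _ le_rfl
    rw [List.take_length, h1] at e1
    have e2 := hB _ le_rfl
    have e3 : ((as ++ [a]).map RLetter.X ++ bs.map RLetter.Y).length - 1
        = as.length + bs.length := by
      simp only [List.length_append, List.length_map, List.length_cons, List.length_nil]; omega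
    rw [e3, e2] at hp
    have := Option.some.inj e1
    omega
  · rintro ⟨q, q', p, h1, h2, h3, h4⟩
    have hb := nextOcc_some h2
    let i : ℕ → ℕ := fun l => (evalFrom u ((as.take l).map RLetter.X) 0).getD 0
    let j : ℕ → ℕ := fun l => if l ≤ as.length then (u.length + 1) else
      (evalFrom u ((bs.take (l - as.length - 1)).map RLetter.Y) q').getD 0
    have hq : ∀ l, as.length ≤ l → i l = q := by
      intro l hl
      simp only [i]
      rw [List.take_of_length_le hl, h1]
      rfl
    have hj0 : ∀ l, l ≤ as.length → j l = (u.length + 1) := by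
      intro l hl
      simp [j, hl]
    have hj1 : j (as.length + 1) = q' := by simp [j, evalFrom]
    have hi : ∀ l (hl : l < as.length), nextOcc u as[l] (i l) = some (i (l+1)) := by
      intro l hl
      obtain ⟨x, y, e1, e2, e3⟩ := takes_X u RLetter.X as _ q h1 l hl
      simp only [i, e1, e2]
      exact e3
    have hj : ∀ l (hl : l < bs.length), prevOcc u bs[l] (j (as.length + 1 + l))
        = some (j (as.length + 1 + l + 1)) := by
      intro l hl
      obtain ⟨x, y, e1, e2, e3⟩ := takes_X u RLetter.Y bs _ p h3 l hl
      have f1 : j (as.length + 1 + l) = x := by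
        have : as.length + 1 + l - as.length - 1 = l := by omega
        simp only [j, this, e1]
        rw [if_neg (by omega)]; rfl
      have f2 : j (as.length + 1 + l + 1) = y := by
        have : as.length + 1 + l + 1 - as.length - 1 = l + 1 := by omega
        simp only [j, this, e2]
        rw [if_neg (by omega)]; rfl
      rw [f1, f2]
      exact e3
    have hjp : j (as.length + 1 + bs.length) = p := by
      have : as.length + 1 + bs.length - as.length - 1 = bs.length := by omega
      simp only [j, this, List.take_length, h3]
      rw [if_neg (by omega)]; rfl
    have aX : ∀ l c, ((as ++ [a]).map RLetter.X ++ bs.map RLetter.Y)[l]? = some (RLetter.X c) →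
        l ≤ as.length := by
      intro l c hc
      by_contra hl
      rw [get_right_X _ _ _ _ (by omega)] at hc
      simp at hc
    have aY : ∀ l c, ((as ++ [a]).map RLetter.X ++ bs.map RLetter.Y)[l]? = some (RLetter.Y c) →
        as.length < l ∧ ∃ h : l - as.length - 1 < bs.length, bs[l - as.length - 1] = c := by
      intro l c hc
      by_contra! hl
      rcases lt_trichotomy l as.length with h | h | h
      · rw [get_left_X _ _ _ _ h] at hc; simp at hc
      · rw [get_mid_X _ _ _ _ h] at hc; simp at hc
      · have hl := hl h
        rw [get_right_X _ _ _ _ h] at hc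
        simp only [Option.map_eq_some_iff, RLetter.Y.injEq] at hc
        obtain ⟨d, hd, rfl⟩ := hc
        obtain ⟨k1, k2⟩ := List.getElem?_eq_some_iff.1 hd
        exact hl k1 k2
    have pXX : ∀ l c b, 1 ≤ l →
        ((as ++ [a]).map RLetter.X ++ bs.map RLetter.Y)[l-1]? = some (RLetter.X c) →
        ((as ++ [a]).map RLetter.X ++ bs.map RLetter.Y)[l]? = some (RLetter.X b) →
        nextOcc u c (i (l-1)) = some (i l) ∧ j l = j (l-1) := by
      intro l c b hl hc hb'
      have k1 := aX _ _ hb'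
      rw [get_left_X _ _ _ _ (by omega)] at hc
      simp only [Option.some.injEq, RLetter.X.injEq] at hc
      subst hc
      have := hi (l-1) (by omega)
      rw [Nat.sub_add_cancel hl] at this
      exact ⟨this, by rw [hj0 _ k1, hj0 _ (by omega)]⟩
    have pYY : ∀ l c b, 1 ≤ l →
        ((as ++ [a]).map RLetter.X ++ bs.map RLetter.Y)[l-1]? = some (RLetter.Y c) →
        ((as ++ [a]).map RLetter.X ++ bs.map RLetter.Y)[l]? = some (RLetter.Y b) →
        i l = i (l-1) ∧ prevOcc u c (j (l-1)) = some (j l) := by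
      intro l c b hl hc _
      obtain ⟨k1, k2, k3⟩ := aY _ _ hc
      refine ⟨by rw [hq _ (by omega), hq _ (by omega)], ?_⟩
      have := hj _ k2
      rw [k3] at this
      have e1 : as.length + 1 + (l - 1 - as.length - 1) = l - 1 := by omega
      rw [e1, Nat.sub_add_cancel hl] at this
      exact this
    have pXY : ∀ l c b, 1 ≤ l →
        ((as ++ [a]).map RLetter.X ++ bs.map RLetter.Y)[l-1]? = some (RLetter.X c) →
        ((as ++ [a]).map RLetter.X ++ bs.map RLetter.Y)[l]? = some (RLetter.Y b) →
        i l = i (l-1) ∧ nextOcc u c (i (l-1)) = some (j l) := by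
      intro l c b hl hc hb'
      have k1 := aX _ _ hc
      obtain ⟨k2, k3⟩ := aY _ _ hb'
      have e : l = as.length + 1 := by omega
      subst e
      rw [get_mid_X _ _ _ _ (by omega)] at hc
      simp only [Option.some.injEq, RLetter.X.injEq] at hc
      subst hc
      refine ⟨by rw [hq _ (by omega), hq _ (by omega)], ?_⟩
      rw [hq _ (by omega), hj1, h2]
    have pYX : ∀ l c b, 1 ≤ l →
        ((as ++ [a]).map RLetter.X ++ bs.map RLetter.Y)[l-1]? = some (RLetter.Y c) →
        ((as ++ [a]).map RLetter.X ++ bs.map RLetter.Y)[l]? = some (RLetter.X b) → False := by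
      intro l c b hl hc hb'
      have k1 := aX _ _ hb'
      obtain ⟨k2, k3⟩ := aY _ _ hc
      omega
    have pN : ∀ l, 1 ≤ l → l < ((as ++ [a]).map RLetter.X ++ bs.map RLetter.Y).length →
        (i (l-1) < i l ∧ j l = j (l-1)) ∨ (i l = i (l-1) ∧ j l < j (l-1)) := by
      intro l hl hlen
      simp at hlen
      rcases lt_trichotomy l (as.length + 1) with h | h | h
      · left
        have := nextOcc_some (hi (l-1) (by omega))
        rw [Nat.sub_add_cancel hl] at this
        exact ⟨by omega, by rw [hj0 _ (by omega), hj0 _ (by omega)]⟩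
      · right
        subst h
        rw [hj1, hj0 _ (by omega)]
        exact ⟨by rw [hq _ (by omega), hq _ (by omega)], by omega⟩
      · right
        refine ⟨by rw [hq _ (by omega), hq _ (by omega)], ?_⟩
        have := prevOcc_some (hj (l - 1 - as.length - 1) (by omega))
        have e1 : as.length + 1 + (l - 1 - as.length - 1) = l - 1 := by omega
        rw [e1, Nat.sub_add_cancel hl] at this
        omega
    have e3 : ((as ++ [a]).map RLetter.X ++ bs.map RLetter.Y).length - 1
        = as.length + bs.length := by
      simp only [List.length_append, List.length_map, List.length_cons, List.length_nil]; omega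
    have pF : p < j (as.length + bs.length) := by
      rcases Nat.eq_zero_or_pos bs.length with h | h
      · have hbs := List.length_eq_zero_iff.1 h
        subst hbs
        simp only [List.map_nil, evalFrom, Option.some.injEq] at h3
        rw [hj0 _ (by simp)]
        omega
      · have := prevOcc_some (hj (bs.length - 1) (by omega))
        have e1 : as.length + 1 + (bs.length - 1) = as.length + bs.length := by omega
        have e4 : as.length + bs.length + 1 = as.length + 1 + bs.length := by omega
        rw [e1, e4, hjp] at this
        omega
    have hi0 : i 0 = 0 := by simp [i, evalFrom]
    have hq2 := hq (as.length + bs.length) (by omega)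
    refine ⟨p, i, j, ?_, hi0, hj0 _ (by omega), pXX, pYY, pXY, fun l c b h5 h6 h7 => (pYX l c b h5 h6 h7).elim, ?_, ?_, ?_⟩
    · rw [evalR_X, evalFrom_split_X]
      exact ⟨q, q', h1, h2, h3⟩
    · intro l h5 h6
      have := pN l h5 h6
      omega
    · rw [e3]; omega
    · rw [e3]; omega

lemma cond_pure_X (u : List A) (as : List A) (a : A) :
    Condensed u ((as ++ [a]).map RLetter.X) ↔ Defined u ((as ++ [a]).map RLetter.X) := by
  have h1 := cond_X u as a []
  have h2 := evalR_X u as a []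
  have h3 := evalFrom_split_X u as a []
  simp only [List.map_nil, List.append_nil] at h1 h2 h3
  rw [h1, Defined, h2, Option.isSome_iff_exists]
  simp only [h3]
  constructor
  · rintro ⟨q, q', p, e1, e2, e3, e4⟩
    exact ⟨p, q, q', e1, e2, e3⟩
  · rintro ⟨p, q, q', e1, e2, e3⟩
    refine ⟨q, q', p, e1, e2, e3, ?_⟩
    have := nextOcc_some e2
    simp only [evalFrom, Option.some.injEq] at e3
    omega

lemma cond_def_X (u : List A) (as : List A) (a : A) (bs : List A) :
    Condensed u ((as ++ [a]).map RLetter.X ++ bs.map RLetter.Y) ↔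
    Defined u ((as ++ [a]).map RLetter.X ++ (bs ++ as.reverse).map RLetter.Y) := by
  rw [cond_X, Defined, evalR_X, Option.isSome_iff_exists]
  rw [show (bs ++ as.reverse).map RLetter.Y = bs.map RLetter.Y ++ as.reverse.map RLetter.Y
    from List.map_append]
  simp only [evalFrom_split_X]
  simp only [evalFrom_append, Option.bind_eq_some_iff]
  have hin : ∀ q q' p, nextOcc u a q = some q' → evalFrom u (bs.map RLetter.Y) q' = some p →
      1 ≤ p ∧ p ≤ u.length := by
    intro q q' p e2 e3
    rcases List.eq_nil_or_concat' bs with h | ⟨bs', b, h⟩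
    · subst h
      simp only [List.map_nil, evalFrom, Option.some.injEq] at e3
      have := nextOcc_some e2
      omega
    · subst h
      rw [List.map_append, evalFrom_append, Option.bind_eq_some_iff] at e3
      obtain ⟨x, _, hx⟩ := e3
      simp only [List.map_cons, List.map_nil, evalFrom, stepR, Option.bind_eq_some_iff,
        Option.some.injEq, exists_eq_right] at hx
      have := prevOcc_some hx
      omega
  constructor
  · rintro ⟨q, q', p, e1, e2, e3, e4⟩
    have := hin _ _ _ e2 e3
    obtain ⟨w, hw⟩ := (keyX u as q p e1 (by omega)).2 e4
    exact ⟨w, q, q', e1, e2, p, e3, hw⟩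
  · rintro ⟨w, q, q', e1, e2, p, e3, hw⟩
    have := hin _ _ _ e2 e3
    exact ⟨q, q', p, e1, e2, e3, (keyX u as q p e1 (by omega)).1 ⟨w, hw⟩⟩

lemma shape1_X (t : List (RLetter A)) : ∀ a, numBlocks (RLetter.X a :: t) ≤ 1 →
    ∃ bs : List A, RLetter.X a :: t = bs.map RLetter.X := by
  induction t with
  | nil => intro a _; exact ⟨[a], rfl⟩
  | cons w t ih =>
    intro a h
    cases w with
    | X b =>
      obtain ⟨bs, hbs⟩ := ih b (by simpa [numBlocks, sameDir] using h)
      exact ⟨a :: bs, by simp [hbs]⟩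
    | Y b =>
      have := one_le_numBlocks (RLetter.Y b) t
      simp [numBlocks, sameDir] at h
      omega

lemma blocks1_X (as : List A) : numBlocks (as.map RLetter.X) ≤ 1 := by
  induction as with
  | nil => simp [numBlocks]
  | cons a t ih =>
    cases t with
    | nil => simp [numBlocks]
    | cons b t => simpa [numBlocks, sameDir] using ih

lemma evalR_Y (u : List A) (as : List A) (a : A) (bs : List (RLetter A)) :
    evalR u ((as ++ [a]).map RLetter.Y ++ bs) =
      evalFrom u ((as ++ [a]).map RLetter.Y ++ bs) (u.length + 1) := by
  cases as <;> rfl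

lemma evalFrom_split_Y (u : List A) (as : List A) (a : A) (bs : List (RLetter A)) (p : ℕ) :
    evalFrom u ((as ++ [a]).map RLetter.Y ++ bs) (u.length + 1) = some p ↔
    ∃ q q', evalFrom u (as.map RLetter.Y) (u.length + 1) = some q ∧ prevOcc u a q = some q' ∧
      evalFrom u bs q' = some p := by
  simp only [evalFrom_append, List.map_append, List.map_cons, List.map_nil, evalFrom, stepR,
    Option.bind_eq_some_iff, Option.some.injEq]
  constructor
  · rintro ⟨x, ⟨y, h1, z, h2, rfl⟩, h3⟩
    exact ⟨y, z, h1, h2, h3⟩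
  · rintro ⟨y, z, h1, h2, h3⟩
    exact ⟨z, ⟨y, h1, z, h2, rfl⟩, h3⟩

lemma get_left_Y (as : List A) (a : A) (bs : List (RLetter A)) (l : ℕ) (h : l < as.length) :
    ((as ++ [a]).map RLetter.Y ++ bs)[l]? = some (RLetter.Y as[l]) := by
  rw [List.getElem?_append_left (by simp; omega)]
  rw [List.getElem?_map, List.getElem?_append_left h]
  simp [h]

lemma get_mid_Y (as : List A) (a : A) (bs : List (RLetter A)) (l : ℕ) (h : l = as.length) :
    ((as ++ [a]).map RLetter.Y ++ bs)[l]? = some (RLetter.Y a) := by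
  subst h
  rw [List.getElem?_append_left (by simp)]
  simp

lemma get_right_Y (as : List A) (a : A) (bs : List A) (l : ℕ) (h : as.length < l) :
    ((as ++ [a]).map RLetter.Y ++ bs.map RLetter.X)[l]? =
      (bs[l - as.length - 1]?).map RLetter.X := by
  rw [List.getElem?_append_right (by simp; omega)]
  simp [Nat.sub_sub]

lemma takes_Y (u : List A) (z : A → RLetter A) (as : List A) (s q : ℕ)
    (h : evalFrom u (as.map z) s = some q) (l : ℕ) (hl : l < as.length) :
    ∃ x y, evalFrom u ((as.take l).map z) s = some x ∧
      evalFrom u ((as.take (l+1)).map z) s = some y ∧ stepR u (z as[l]) x = some y := by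
  rw [← List.take_append_drop (l+1) as, List.map_append, evalFrom_append,
    Option.bind_eq_some_iff] at h
  obtain ⟨y, h1, h2⟩ := h
  have h3 := h1
  rw [List.take_succ_eq_append_getElem hl, List.map_append, evalFrom_append,
    Option.bind_eq_some_iff] at h3
  obtain ⟨x, h4, h5⟩ := h3
  refine ⟨x, y, h4, h1, ?_⟩
  simpa [evalFrom] using h5

lemma cond_Y (u : List A) (as : List A) (a : A) (bs : List A) :
    Condensed u ((as ++ [a]).map RLetter.Y ++ bs.map RLetter.X) ↔
    ∃ q q' p, evalFrom u (as.map RLetter.Y) (u.length + 1) = some q ∧ prevOcc u a q = some q' ∧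
      evalFrom u (bs.map RLetter.X) q' = some p ∧ p < q := by
  constructor
  · rintro ⟨p, j, i, he, -, hi0, hYY, hXX, hYX, hXY, hN, -, hp⟩
    rw [evalR_Y, evalFrom_split_Y] at he
    obtain ⟨q, q', h1, h2, h3⟩ := he
    refine ⟨q, q', p, h1, h2, h3, ?_⟩
    have hA : ∀ l, l ≤ as.length →
        evalFrom u ((as.take l).map RLetter.Y) (u.length + 1) = some (i l) := by
      intro l
      induction l with
      | zero => intro _; simp [evalFrom, hi0]
      | succ l ih =>
        intro hl
        have g1 := get_left_Y as a (bs.map RLetter.X) l hl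
        have g2 : ∃ b, ((as ++ [a]).map RLetter.Y ++ bs.map RLetter.X)[l+1]?
            = some (RLetter.Y b) := by
          rcases Nat.lt_or_ge (l+1) as.length with h | h
          · exact ⟨_, get_left_Y as a _ (l+1) h⟩
          · exact ⟨_, get_mid_Y as a _ (l+1) (by omega)⟩
        obtain ⟨b, g2⟩ := g2
        have h5 := (hXX (l+1) _ b (by omega) g1 g2).2
        rw [List.take_succ_eq_append_getElem hl, List.map_append, evalFrom_append,
          ih (by omega)]
        simpa [evalFrom, stepR] using h5
    have hB : ∀ l, l ≤ bs.length → i (as.length + l) = i as.length := by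
      intro l
      induction l with
      | zero => intro _; rfl
      | succ l ih =>
        intro hl
        have g2 : ((as ++ [a]).map RLetter.Y ++ bs.map RLetter.X)[as.length + l + 1]?
            = some (RLetter.X bs[l]) := by
          rw [get_right_Y _ _ _ _ (by omega)]
          have : as.length + l + 1 - as.length - 1 = l := by omega
          rw [this]
          simp [show l < bs.length from hl]
        rw [← ih (by omega)]
        rcases Nat.eq_zero_or_pos l with h0 | h0
        · exact (hXY (as.length + l + 1) a _ (by omega) (get_mid_Y _ _ _ _ (by omega)) g2).2
        · have g1 : ((as ++ [a]).map RLetter.Y ++ bs.map RLetter.X)[as.length + l]?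
            = some (RLetter.X bs[l-1]) := by
            rw [get_right_Y _ _ _ _ (by omega)]
            have : as.length + l - as.length - 1 = l - 1 := by omega
            rw [this]
            simp [show l - 1 < bs.length by omega]
          exact (hYY (as.length + l + 1) _ _ (by omega) g1 g2).2
    have e1 := hA _ le_rfl
    rw [List.take_length, h1] at e1
    have e2 := hB _ le_rfl
    have e3 : ((as ++ [a]).map RLetter.Y ++ bs.map RLetter.X).length - 1
        = as.length + bs.length := by
      simp only [List.length_append, List.length_map, List.length_cons, List.length_nil]; omega
    rw [e3, e2] at hp
    have := Option.some.inj e1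
    omega
  · rintro ⟨q, q', p, h1, h2, h3, h4⟩
    have hb := prevOcc_some h2
    let i : ℕ → ℕ := fun l => (evalFrom u ((as.take l).map RLetter.Y) (u.length + 1)).getD 0
    let j : ℕ → ℕ := fun l => if l ≤ as.length then 0 else
      (evalFrom u ((bs.take (l - as.length - 1)).map RLetter.X) q').getD 0
    have hq : ∀ l, as.length ≤ l → i l = q := by
      intro l hl
      simp only [i]
      rw [List.take_of_length_le hl, h1]
      rfl
    have hj0 : ∀ l, l ≤ as.length → j l = 0 := by
      intro l hl
      simp [j, hl]
    have hj1 : j (as.length + 1) = q' := by simp [j, evalFrom]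
    have hi : ∀ l (hl : l < as.length), prevOcc u as[l] (i l) = some (i (l+1)) := by
      intro l hl
      obtain ⟨x, y, e1, e2, e3⟩ := takes_Y u RLetter.Y as _ q h1 l hl
      simp only [i, e1, e2]
      exact e3
    have hj : ∀ l (hl : l < bs.length), nextOcc u bs[l] (j (as.length + 1 + l))
        = some (j (as.length + 1 + l + 1)) := by
      intro l hl
      obtain ⟨x, y, e1, e2, e3⟩ := takes_Y u RLetter.X bs _ p h3 l hl
      have f1 : j (as.length + 1 + l) = x := by
        have : as.length + 1 + l - as.length - 1 = l := by omega
        simp only [j, this, e1]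
        rw [if_neg (by omega)]; rfl
      have f2 : j (as.length + 1 + l + 1) = y := by
        have : as.length + 1 + l + 1 - as.length - 1 = l + 1 := by omega
        simp only [j, this, e2]
        rw [if_neg (by omega)]; rfl
      rw [f1, f2]
      exact e3
    have hjp : j (as.length + 1 + bs.length) = p := by
      have : as.length + 1 + bs.length - as.length - 1 = bs.length := by omega
      simp only [j, this, List.take_length, h3]
      rw [if_neg (by omega)]; rfl
    have aX : ∀ l c, ((as ++ [a]).map RLetter.Y ++ bs.map RLetter.X)[l]? = some (RLetter.Y c) →
        l ≤ as.length := by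
      intro l c hc
      by_contra hl
      rw [get_right_Y _ _ _ _ (by omega)] at hc
      simp at hc
    have aY : ∀ l c, ((as ++ [a]).map RLetter.Y ++ bs.map RLetter.X)[l]? = some (RLetter.X c) →
        as.length < l ∧ ∃ h : l - as.length - 1 < bs.length, bs[l - as.length - 1] = c := by
      intro l c hc
      by_contra! hl
      rcases lt_trichotomy l as.length with h | h | h
      · rw [get_left_Y _ _ _ _ h] at hc; simp at hc
      · rw [get_mid_Y _ _ _ _ h] at hc; simp at hc
      · have hl := hl h
        rw [get_right_Y _ _ _ _ h] at hc
        simp only [Option.map_eq_some_iff, RLetter.X.injEq] at hc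
        obtain ⟨d, hd, rfl⟩ := hc
        obtain ⟨k1, k2⟩ := List.getElem?_eq_some_iff.1 hd
        exact hl k1 k2
    have pXX : ∀ l c b, 1 ≤ l →
        ((as ++ [a]).map RLetter.Y ++ bs.map RLetter.X)[l-1]? = some (RLetter.Y c) →
        ((as ++ [a]).map RLetter.Y ++ bs.map RLetter.X)[l]? = some (RLetter.Y b) →
        prevOcc u c (i (l-1)) = some (i l) ∧ j l = j (l-1) := by
      intro l c b hl hc hb'
      have k1 := aX _ _ hb'
      rw [get_left_Y _ _ _ _ (by omega)] at hc
      simp only [Option.some.injEq, RLetter.Y.injEq] at hc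
      subst hc
      have := hi (l-1) (by omega)
      rw [Nat.sub_add_cancel hl] at this
      exact ⟨this, by rw [hj0 _ k1, hj0 _ (by omega)]⟩
    have pYY : ∀ l c b, 1 ≤ l →
        ((as ++ [a]).map RLetter.Y ++ bs.map RLetter.X)[l-1]? = some (RLetter.X c) →
        ((as ++ [a]).map RLetter.Y ++ bs.map RLetter.X)[l]? = some (RLetter.X b) →
        i l = i (l-1) ∧ nextOcc u c (j (l-1)) = some (j l) := by
      intro l c b hl hc _
      obtain ⟨k1, k2, k3⟩ := aY _ _ hc
      refine ⟨by rw [hq _ (by omega), hq _ (by omega)], ?_⟩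
      have := hj _ k2
      rw [k3] at this
      have e1 : as.length + 1 + (l - 1 - as.length - 1) = l - 1 := by omega
      rw [e1, Nat.sub_add_cancel hl] at this
      exact this
    have pXY : ∀ l c b, 1 ≤ l →
        ((as ++ [a]).map RLetter.Y ++ bs.map RLetter.X)[l-1]? = some (RLetter.Y c) →
        ((as ++ [a]).map RLetter.Y ++ bs.map RLetter.X)[l]? = some (RLetter.X b) →
        i l = i (l-1) ∧ prevOcc u c (i (l-1)) = some (j l) := by
      intro l c b hl hc hb'
      have k1 := aX _ _ hc
      obtain ⟨k2, k3⟩ := aY _ _ hb'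
      have e : l = as.length + 1 := by omega
      subst e
      rw [get_mid_Y _ _ _ _ (by omega)] at hc
      simp only [Option.some.injEq, RLetter.Y.injEq] at hc
      subst hc
      refine ⟨by rw [hq _ (by omega), hq _ (by omega)], ?_⟩
      rw [hq _ (by omega), hj1, h2]
    have pYX : ∀ l c b, 1 ≤ l →
        ((as ++ [a]).map RLetter.Y ++ bs.map RLetter.X)[l-1]? = some (RLetter.X c) →
        ((as ++ [a]).map RLetter.Y ++ bs.map RLetter.X)[l]? = some (RLetter.Y b) → False := by
      intro l c b hl hc hb'
      have k1 := aX _ _ hb'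
      obtain ⟨k2, k3⟩ := aY _ _ hc
      omega
    have pN : ∀ l, 1 ≤ l → l < ((as ++ [a]).map RLetter.Y ++ bs.map RLetter.X).length →
        (i l < i (l-1) ∧ j l = j (l-1)) ∨ (i l = i (l-1) ∧ j (l-1) < j l) := by
      intro l hl hlen
      simp at hlen
      rcases lt_trichotomy l (as.length + 1) with h | h | h
      · left
        have := prevOcc_some (hi (l-1) (by omega))
        rw [Nat.sub_add_cancel hl] at this
        exact ⟨by omega, by rw [hj0 _ (by omega), hj0 _ (by omega)]⟩
      · right
        subst h
        rw [hj1, hj0 _ (by omega)]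
        exact ⟨by rw [hq _ (by omega), hq _ (by omega)], by omega⟩
      · right
        refine ⟨by rw [hq _ (by omega), hq _ (by omega)], ?_⟩
        have := nextOcc_some (hj (l - 1 - as.length - 1) (by omega))
        have e1 : as.length + 1 + (l - 1 - as.length - 1) = l - 1 := by omega
        rw [e1, Nat.sub_add_cancel hl] at this
        omega
    have e3 : ((as ++ [a]).map RLetter.Y ++ bs.map RLetter.X).length - 1
        = as.length + bs.length := by
      simp only [List.length_append, List.length_map, List.length_cons, List.length_nil]; omega
    have pF : j (as.length + bs.length) < p := by
      rcases Nat.eq_zero_or_pos bs.length with h | h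
      · have hbs := List.length_eq_zero_iff.1 h
        subst hbs
        simp only [List.map_nil, evalFrom, Option.some.injEq] at h3
        rw [hj0 _ (by simp)]
        omega
      · have := nextOcc_some (hj (bs.length - 1) (by omega))
        have e1 : as.length + 1 + (bs.length - 1) = as.length + bs.length := by omega
        have e4 : as.length + bs.length + 1 = as.length + 1 + bs.length := by omega
        rw [e1, e4, hjp] at this
        omega
    have hi0 : i 0 = (u.length + 1) := by simp [i, evalFrom]
    have hq2 := hq (as.length + bs.length) (by omega)
    refine ⟨p, j, i, ?_, hj0 _ (by omega), hi0, fun l c b h5 h6 h7 => (pYY l c b h5 h6 h7).symm, fun l c b h5 h6 h7 => (pXX l c b h5 h6 h7).symm, fun l c b h5 h6 h7 => (pYX l c b h5 h6 h7).elim, fun l c b h5 h6 h7 => (pXY l c b h5 h6 h7).symm, ?_, ?_, ?_⟩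
    · rw [evalR_Y, evalFrom_split_Y]
      exact ⟨q, q', h1, h2, h3⟩
    · intro l h5 h6
      have := pN l h5 h6
      omega
    · rw [e3]; omega
    · rw [e3]; omega

lemma cond_pure_Y (u : List A) (as : List A) (a : A) :
    Condensed u ((as ++ [a]).map RLetter.Y) ↔ Defined u ((as ++ [a]).map RLetter.Y) := by
  have h1 := cond_Y u as a []
  have h2 := evalR_Y u as a []
  have h3 := evalFrom_split_Y u as a []
  simp only [List.map_nil, List.append_nil] at h1 h2 h3
  rw [h1, Defined, h2, Option.isSome_iff_exists]
  simp only [h3]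
  constructor
  · rintro ⟨q, q', p, e1, e2, e3, e4⟩
    exact ⟨p, q, q', e1, e2, e3⟩
  · rintro ⟨p, q, q', e1, e2, e3⟩
    refine ⟨q, q', p, e1, e2, e3, ?_⟩
    have := prevOcc_some e2
    simp only [evalFrom, Option.some.injEq] at e3
    omega

lemma cond_def_Y (u : List A) (as : List A) (a : A) (bs : List A) :
    Condensed u ((as ++ [a]).map RLetter.Y ++ bs.map RLetter.X) ↔
    Defined u ((as ++ [a]).map RLetter.Y ++ (bs ++ as.reverse).map RLetter.X) := by
  rw [cond_Y, Defined, evalR_Y, Option.isSome_iff_exists]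
  rw [show (bs ++ as.reverse).map RLetter.X = bs.map RLetter.X ++ as.reverse.map RLetter.X
    from List.map_append]
  simp only [evalFrom_split_Y]
  simp only [evalFrom_append, Option.bind_eq_some_iff]
  have hin : ∀ q q' p, prevOcc u a q = some q' → evalFrom u (bs.map RLetter.X) q' = some p →
      1 ≤ p ∧ p ≤ u.length := by
    intro q q' p e2 e3
    rcases List.eq_nil_or_concat' bs with h | ⟨bs', b, h⟩
    · subst h
      simp only [List.map_nil, evalFrom, Option.some.injEq] at e3
      have := prevOcc_some e2
      omega
    · subst h
      rw [List.map_append, evalFrom_append, Option.bind_eq_some_iff] at e3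
      obtain ⟨x, _, hx⟩ := e3
      simp only [List.map_cons, List.map_nil, evalFrom, stepR, Option.bind_eq_some_iff,
        Option.some.injEq, exists_eq_right] at hx
      have := nextOcc_some hx
      omega
  constructor
  · rintro ⟨q, q', p, e1, e2, e3, e4⟩
    have := hin _ _ _ e2 e3
    obtain ⟨w, hw⟩ := (keyY u as q p e1 (by omega)).2 e4
    exact ⟨w, q, q', e1, e2, p, e3, hw⟩
  · rintro ⟨w, q, q', e1, e2, p, e3, hw⟩
    have := hin _ _ _ e2 e3
    exact ⟨q, q', p, e1, e2, e3, (keyY u as q p e1 (by omega)).1 ⟨w, hw⟩⟩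

lemma shape1_Y (t : List (RLetter A)) : ∀ a, numBlocks (RLetter.Y a :: t) ≤ 1 →
    ∃ bs : List A, RLetter.Y a :: t = bs.map RLetter.Y := by
  induction t with
  | nil => intro a _; exact ⟨[a], rfl⟩
  | cons w t ih =>
    intro a h
    cases w with
    | Y b =>
      obtain ⟨bs, hbs⟩ := ih b (by simpa [numBlocks, sameDir] using h)
      exact ⟨a :: bs, by simp [hbs]⟩
    | X b =>
      have := one_le_numBlocks (RLetter.X b) t
      simp [numBlocks, sameDir] at h
      omega

lemma blocks1_Y (as : List A) : numBlocks (as.map RLetter.Y) ≤ 1 := by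
  induction as with
  | nil => simp [numBlocks]
  | cons a t ih =>
    cases t with
    | nil => simp [numBlocks]
    | cons b t => simpa [numBlocks, sameDir] using ih

lemma shape2_X (t : List (RLetter A)) : ∀ a, numBlocks (RLetter.X a :: t) ≤ 2 →
    ∃ as bs : List A, as ≠ [] ∧
      RLetter.X a :: t = as.map RLetter.X ++ bs.map RLetter.Y := by
  induction t with
  | nil => intro a _; exact ⟨[a], [], by simp, rfl⟩
  | cons w t ih =>
    intro a h
    cases w with
    | X b =>
      obtain ⟨as, bs, h1, hbs⟩ := ih b (by simpa [numBlocks, sameDir] using h)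
      exact ⟨a :: as, bs, by simp, by simp [hbs]⟩
    | Y b =>
      obtain ⟨bs, hbs⟩ := shape1_Y t b (by simp [numBlocks, sameDir] at h; omega)
      exact ⟨[a], bs, by simp, by simp [hbs]⟩

lemma blocks2_X (as bs : List A) :
    numBlocks (as.map RLetter.X ++ bs.map RLetter.Y) ≤ 2 := by
  induction as with
  | nil => have := blocks1_Y bs; simp; omega
  | cons a t ih =>
    cases t with
    | nil =>
      cases bs with
      | nil => simp [numBlocks]
      | cons b bs =>
        have := blocks1_Y (b :: bs)
        simp [numBlocks, sameDir] at this ⊢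
        omega
    | cons b t => simpa [numBlocks, sameDir] using ih

lemma main_X (n : ℕ) (hn : 2 ≤ n) (u v : List A)
    (H : ∀ r, uRX 2 (2*n) r → (Defined u r ↔ Defined v r)) : trir 2 n u v := by
  rintro r (⟨m', n', hm, hn', rfl, hl, b, t, rfl⟩ | ⟨m', n', hm, hn', rfl, hl, b, t, rfl⟩)
  · obtain ⟨as, bs, h1, h2⟩ := shape2_X t b hm
    rcases List.eq_nil_or_concat' as with h | ⟨as, a, h⟩
    · exact absurd h h1
    subst h
    rw [h2] at hl ⊢
    rw [cond_def_X, cond_def_X]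
    apply H
    left
    refine ⟨_, _, blocks2_X _ _, ?_, rfl, rfl, ?_⟩
    · simp at hl ⊢
      omega
    · cases as with
      | nil => exact ⟨a, _, rfl⟩
      | cons c as => exact ⟨c, _, rfl⟩
  · obtain ⟨as, h2⟩ := shape1_Y t b (by omega)
    have h3 : uRX 2 (2*n) (RLetter.Y b :: t) :=
      Or.inr ⟨_, _, hm, by omega, rfl, rfl, b, t, rfl⟩
    have h4 := H _ h3
    rcases List.eq_nil_or_concat' as with h | ⟨as, a, h⟩
    · subst h; simp at h2
    subst h
    rw [h2] at h4 ⊢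
    rw [cond_pure_Y, cond_pure_Y]
    exact h4

lemma shape2_Y (t : List (RLetter A)) : ∀ a, numBlocks (RLetter.Y a :: t) ≤ 2 →
    ∃ as bs : List A, as ≠ [] ∧
      RLetter.Y a :: t = as.map RLetter.Y ++ bs.map RLetter.X := by
  induction t with
  | nil => intro a _; exact ⟨[a], [], by simp, rfl⟩
  | cons w t ih =>
    intro a h
    cases w with
    | Y b =>
      obtain ⟨as, bs, h1, hbs⟩ := ih b (by simpa [numBlocks, sameDir] using h)
      exact ⟨a :: as, bs, by simp, by simp [hbs]⟩
    | X b =>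
      obtain ⟨bs, hbs⟩ := shape1_X t b (by simp [numBlocks, sameDir] at h; omega)
      exact ⟨[a], bs, by simp, by simp [hbs]⟩

lemma blocks2_Y (as bs : List A) :
    numBlocks (as.map RLetter.Y ++ bs.map RLetter.X) ≤ 2 := by
  induction as with
  | nil => have := blocks1_X bs; simp; omega
  | cons a t ih =>
    cases t with
    | nil =>
      cases bs with
      | nil => simp [numBlocks]
      | cons b bs =>
        have := blocks1_X (b :: bs)
        simp [numBlocks, sameDir] at this ⊢
        omega
    | cons b t => simpa [numBlocks, sameDir] using ih

lemma main_Y (n : ℕ) (hn : 2 ≤ n) (u v : List A)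
    (H : ∀ r, uRY 2 (2*n) r → (Defined u r ↔ Defined v r)) : tril 2 n u v := by
  rintro r (⟨m', n', hm, hn', rfl, hl, b, t, rfl⟩ | ⟨m', n', hm, hn', rfl, hl, b, t, rfl⟩)
  · obtain ⟨as, bs, h1, h2⟩ := shape2_Y t b hm
    rcases List.eq_nil_or_concat' as with h | ⟨as, a, h⟩
    · exact absurd h h1
    subst h
    rw [h2] at hl ⊢
    rw [cond_def_Y, cond_def_Y]
    apply H
    left
    refine ⟨_, _, blocks2_Y _ _, ?_, rfl, rfl, ?_⟩
    · simp at hl ⊢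
      omega
    · cases as with
      | nil => exact ⟨a, _, rfl⟩
      | cons c as => exact ⟨c, _, rfl⟩
  · obtain ⟨as, h2⟩ := shape1_X t b (by omega)
    have h3 : uRY 2 (2*n) (RLetter.X b :: t) :=
      Or.inr ⟨_, _, hm, by omega, rfl, rfl, b, t, rfl⟩
    have h4 := H _ h3
    rcases List.eq_nil_or_concat' as with h | ⟨as, a, h⟩
    · subst h; simp at h2
    subst h
    rw [h2] at h4 ⊢
    rw [cond_pure_X, cond_pure_X]
    exact h4

/-- For `n ≥ 2`, agreement on rankers from `uR^X_{2,2n}` implies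
`u ⊳_{2,n} v`; dually for `Y`. -/
theorem statement17 (n : ℕ) (hn : 2 ≤ n) (u v : List A) :
    ((∀ r, uRX 2 (2*n) r → (Defined u r ↔ Defined v r)) → trir 2 n u v) ∧
    ((∀ r, uRY 2 (2*n) r → (Defined u r ↔ Defined v r)) → tril 2 n u v) := by
  exact ⟨main_X n hn u v, main_Y n hn u v⟩

end RankerPaper
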